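/- arXiv:2311.17433 — 2 statements merged into one kernel-verified Lean document; each statement's English description precedes it below -/
import Mathlib

section
/- Let A₂(m,ℓ) be the (2m+2ℓ)×(2m+2ℓ) symmetric block matrix [[R_{2m}, J],[J, -R_{2ℓ}]], where R_k is the k×k reverse identity matrix. Then the characteristic polynomial of A₂(m,ℓ) is (x^2 - (4mℓ+1))(x-1)^{m+ℓ-1}(x+1)^{m+ℓ-1}. -/
open Polynomial Matrix

/-- The all-ones matrix. -/
def Jmat (p q : Type*) : Matrix p q ℤ := Matrix.of fun _ _ => 1

/-- The `k×k` reverse identity matrix (`1` on the antidiagonal). -/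
def revId (k : ℕ) : Matrix (Fin k) (Fin k) ℤ :=
  Matrix.of fun i j => if (i : ℕ) + (j : ℕ) = k - 1 then 1 else 0

/-- `A₂(m,ℓ) = [[R_{2m}, J],[J, -R_{2ℓ}]]`. -/
def A2mat (m l : ℕ) : Matrix (Fin (2 * m) ⊕ Fin (2 * l)) (Fin (2 * m) ⊕ Fin (2 * l)) ℤ :=
  Matrix.fromBlocks (revId (2 * m)) (Jmat _ _) (Jmat _ _) (-(revId (2 * l)))

lemma det_scalar_sub_const {S : Type*} [CommRing S] (k : ℕ) (a c : S) :
    (a • (1 : Matrix (Fin k) (Fin k) S) - Matrix.of fun _ _ => c).det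
      = a ^ k - k * c * a ^ (k - 1) := by
  have h := Matrix.eval_charpoly (vecMulVec (fun _ : Fin k => c) (fun _ => (1 : S))) a
  rw [Matrix.charpoly_vecMulVec] at h
  have e : (a • (1 : Matrix (Fin k) (Fin k) S) - Matrix.of fun _ _ => c)
      = (scalar (Fin k)) a - vecMulVec (fun _ : Fin k => c) (fun _ => (1 : S)) := by
    ext i j
    simp [vecMulVec_apply, Matrix.scalar_apply, Matrix.one_apply, Matrix.diagonal_apply]
  rw [e, ← h]
  simp [dotProduct, Polynomial.eval_smul]

lemma det_block_circ {S : Type*} [CommRing S] (k : ℕ) (x c : S) :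
    (fromBlocks (x • (1 : Matrix (Fin k) (Fin k) S)) (c • (1 : Matrix (Fin k) (Fin k) S))
      (c • (1 : Matrix (Fin k) (Fin k) S)) (x • (1 : Matrix (Fin k) (Fin k) S))).det
      = (x + c) ^ k * (x - c) ^ k := by
  have h : fromBlocks (1 : Matrix (Fin k) (Fin k) S) 1 0 (1 : Matrix (Fin k) (Fin k) S) *
      fromBlocks (x • (1 : Matrix (Fin k) (Fin k) S)) (c • (1 : Matrix (Fin k) (Fin k) S))
      (c • (1 : Matrix (Fin k) (Fin k) S)) (x • (1 : Matrix (Fin k) (Fin k) S)) *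
      fromBlocks (1 : Matrix (Fin k) (Fin k) S) (-1) 0 (1 : Matrix (Fin k) (Fin k) S)
      = fromBlocks ((x + c) • (1 : Matrix (Fin k) (Fin k) S)) 0 (c • 1) ((x - c) • 1) := by
    simp only [fromBlocks_multiply]
    congr 1
    · simp [add_smul]
    · simp; abel
    · simp
    · simp [sub_smul]; abel
  have h2 := congrArg det h
  rw [det_mul, det_mul, det_fromBlocks_zero₂₁, det_fromBlocks_zero₂₁,
    det_fromBlocks_zero₁₂] at h2
  simpa [det_smul] using h2

lemma det_add_revId (m : ℕ) (c : ℤ[X]) :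
    ((X : ℤ[X]) • (1 : Matrix (Fin (2 * m)) (Fin (2 * m)) ℤ[X]) + c • (revId (2 * m)).map C).det
      = (X + c) ^ m * (X - c) ^ m := by
  let e : Fin m ⊕ Fin m ≃ Fin (2 * m) :=
    ((Equiv.sumCongr (Equiv.refl _) Fin.revPerm).trans finSumFinEquiv).trans
      (finCongr (two_mul m).symm)
  have e1 (i : Fin m) : (e (Sum.inl i) : ℕ) = i := by simp [e]
  have e2 (i : Fin m) : (e (Sum.inr i) : ℕ) = m + (m - (i + 1)) := by
    simp [e, Fin.val_rev]; omega
  rw [← det_block_circ, ← Matrix.det_submatrix_equiv_self e]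
  congr 1
  have hr (i j) : (revId (2 * m)) (e i) (e j)
      = (fromBlocks 0 1 1 0 : Matrix (Fin m ⊕ Fin m) (Fin m ⊕ Fin m) ℤ) i j := by
    rcases i with i | i <;> rcases j with j | j <;>
      simp only [revId, Matrix.of_apply, e1, e2, fromBlocks_apply₁₁, fromBlocks_apply₁₂,
        fromBlocks_apply₂₁, fromBlocks_apply₂₂, Matrix.one_apply, Fin.ext_iff, Matrix.zero_apply]
    · rw [if_neg]; omega
    · congr 1; apply propext; omega
    · congr 1; apply propext; omega
    · rw [if_neg]; omega
  refine Matrix.ext fun i j => ?_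
  rw [submatrix_apply, Matrix.add_apply, Matrix.smul_apply, Matrix.smul_apply, Matrix.map_apply, hr]
  rcases i with i | i <;> rcases j with j | j <;>
    simp [Matrix.one_apply]

lemma J_mul_revId (q : Type*) (k : ℕ) :
    (Matrix.of fun _ _ => 1 : Matrix q (Fin k) ℤ[X]) * (revId k).map C
      = Matrix.of fun _ _ => 1 := by
  refine Matrix.ext fun i j => ?_
  simp only [Matrix.mul_apply, Matrix.of_apply, Matrix.map_apply, revId, one_mul]
  rw [Finset.sum_eq_single (Fin.rev j)]
  · rw [if_pos (by rw [Fin.val_rev]; omega)]; simp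
  · intro b _ hb
    rw [if_neg]
    · simp
    · intro h; apply hb; ext; rw [Fin.val_rev]; omega
  · simp

lemma revId_mul_revId (k : ℕ) :
    (revId k).map C * (revId k).map C = (1 : Matrix (Fin k) (Fin k) ℤ[X]) := by
  refine Matrix.ext fun i j => ?_
  simp only [Matrix.mul_apply, Matrix.map_apply, revId, Matrix.of_apply]
  rw [Finset.sum_eq_single (Fin.rev i)]
  · rw [if_pos (by simp [Fin.val_rev]; omega), Matrix.one_apply]
    by_cases h : i = j
    · subst h; rw [if_pos (by simp [Fin.val_rev]; omega)]; simp
    · rw [if_neg, if_neg h]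
      · simp
      · intro h'; apply h; ext; simp [Fin.val_rev] at h'; omega
  · intro b _ hb
    rw [if_neg]
    · simp
    · intro h; apply hb; ext; simp [Fin.val_rev]; omega
  · simp

lemma det_offdiag (p q : ℕ) (u v : ℤ[X]) (huv : u * v ≠ 0) :
    (fromBlocks ((u * v) • (1 : Matrix (Fin p) (Fin p) ℤ[X])) (Matrix.of fun _ _ => -u)
      (Matrix.of fun _ _ => -v) ((u * v) • (1 : Matrix (Fin q) (Fin q) ℤ[X]))).det
      = (u * v) ^ p * ((u * v) ^ q - q * p * (u * v) ^ (q - 1)) := by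
  have h : fromBlocks ((u * v) • (1 : Matrix (Fin p) (Fin p) ℤ[X])) (Matrix.of fun _ _ => -u)
      (Matrix.of fun _ _ => -v) ((u * v) • (1 : Matrix (Fin q) (Fin q) ℤ[X])) *
      fromBlocks 1 (Matrix.of fun _ _ => u) 0 ((u * v) • 1)
      = fromBlocks ((u * v) • (1 : Matrix (Fin p) (Fin p) ℤ[X])) 0 (Matrix.of fun _ _ => -v)
        ((u * v) • ((u * v) • 1 - Matrix.of fun _ _ => (p : ℤ[X]))) := by
    rw [fromBlocks_multiply]
    congr 1
    · simp
    · refine Matrix.ext fun i j => ?_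
      simp
    · simp
    · refine Matrix.ext fun i j => ?_
      simp [Matrix.mul_apply]; ring
  have h2 := congrArg det h
  rw [det_mul, det_fromBlocks_zero₂₁, det_fromBlocks_zero₁₂, det_smul (_ - _),
    det_scalar_sub_const] at h2
  simp only [det_smul, det_one, Fintype.card_fin, mul_one, one_mul] at h2
  apply mul_right_cancel₀ (pow_ne_zero q huv)
  rw [h2]; ring

/-- the characteristic polynomial of `A₂(m,ℓ)`. -/
theorem stmt2 (m l : ℕ) (hl : 2 ≤ l) (hml : l ≤ m) :
    (A2mat m l).charpoly
      = (X ^ 2 - C (4 * (m : ℤ) * l + 1)) * (X - 1) ^ (m + l - 1) * (X + 1) ^ (m + l - 1) := by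
  have hu : ((X : ℤ[X]) - 1) ≠ 0 := X_sub_C_ne_zero (1 : ℤ)
  have hv : ((X : ℤ[X]) + 1) ≠ 0 := X_add_C_ne_zero (1 : ℤ)
  have huv := mul_ne_zero hu hv
  have hA : (A2mat m l).charmatrix = fromBlocks
      ((X : ℤ[X]) • 1 - (revId (2 * m)).map C) (-(Matrix.of fun _ _ => 1))
      (-(Matrix.of fun _ _ => 1)) ((X : ℤ[X]) • 1 + (revId (2 * l)).map C) := by
    refine Matrix.ext fun i j => ?_
    rcases i with i | i <;> rcases j with j | j <;>
      simp [A2mat, Jmat, charmatrix_apply, Matrix.one_apply, Matrix.diagonal_apply]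
  have h : (A2mat m l).charmatrix * fromBlocks
      ((X : ℤ[X]) • 1 + (1 : ℤ[X]) • (revId (2 * m)).map C) 0 0
      ((X : ℤ[X]) • 1 + (-1 : ℤ[X]) • (revId (2 * l)).map C)
      = fromBlocks (((X - 1) * (X + 1) : ℤ[X]) • 1) (Matrix.of fun _ _ => -(X - 1))
        (Matrix.of fun _ _ => -(X + 1)) (((X - 1) * (X + 1) : ℤ[X]) • 1) := by
    rw [hA, fromBlocks_multiply]
    congr 1
    · simp only [Matrix.mul_zero, add_zero, one_smul, Matrix.sub_mul, Matrix.mul_add,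
        revId_mul_revId, Matrix.smul_mul, Matrix.mul_smul, Matrix.one_mul, Matrix.mul_one]
      module
    · simp only [Matrix.mul_zero, zero_add, Matrix.neg_mul, Matrix.mul_add, Matrix.mul_smul,
        J_mul_revId, Matrix.mul_one]
      refine Matrix.ext fun i j => ?_
      simp; ring
    · simp only [Matrix.mul_zero, add_zero, Matrix.neg_mul, Matrix.mul_add, Matrix.mul_smul,
        J_mul_revId, Matrix.mul_one]
      refine Matrix.ext fun i j => ?_
      simp; ring
    · simp only [Matrix.mul_zero, zero_add, Matrix.add_mul, Matrix.mul_add,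
        revId_mul_revId, Matrix.smul_mul, Matrix.mul_smul, Matrix.one_mul, Matrix.mul_one]
      module
  have h2 := congrArg det h
  rw [det_mul, det_fromBlocks_zero₂₁, det_add_revId, det_add_revId, det_offdiag _ _ _ _ huv] at h2
  change (A2mat m l).charpoly * _ = _ at h2
  apply mul_right_cancel₀ (pow_ne_zero (m + l) huv)
  have e1 : (X - 1 : ℤ[X]) = X + -1 := by ring
  obtain ⟨n, rfl⟩ : ∃ n, l = n + 1 := ⟨l - 1, by omega⟩
  have t1 : 2 * (n + 1) - 1 = 2 * n + 1 := by omega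
  have t2 : m + (n + 1) - 1 = m + n := by omega
  rw [t1] at h2
  rw [t2]
  calc _ = (A2mat m (n+1)).charpoly * ((X + 1) ^ m * (X - 1) ^ m *
        ((X + -1) ^ (n + 1) * (X - -1) ^ (n + 1))) := by
        rw [sub_neg_eq_add, ← e1, mul_pow]; ring
    _ = _ := by
        rw [h2]
        simp only [map_add, map_mul, map_one, map_natCast, map_ofNat, Int.cast_natCast]
        push_cast
        have : ((X : ℤ[X]) ^ 2 - (4 * (m : ℤ[X]) * ((n : ℤ[X]) + 1) + 1))
            = ((X : ℤ[X]) - 1) * (X + 1) - 4 * (m : ℤ[X]) * ((n : ℤ[X]) + 1) := by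
          ring
        rw [this]
        generalize hw : ((X : ℤ[X]) - 1) * (X + 1) = w
        rw [mul_assoc _ ((X - 1 : ℤ[X]) ^ _), ← mul_pow, hw]
        ring
end

section
/- The signed graphs A₂(m,ℓ) + α·K₂ and A₂(m',ℓ') + α'·K₂ are cospectral if and only if mℓ = m'ℓ' and m + ℓ + α = m' + ℓ' + α'. Concretely: the block diagonal matrix diag(A₂(m,ℓ), R₂,...,R₂) (with α copies of R₂) has the same characteristic polynomial as diag(A₂(m',ℓ'), R₂,...,R₂) (with α' copies of R₂) if and only if mℓ = m'ℓ' and m + ℓ + α = m' + ℓ' + α'. -/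
open Polynomial Matrix

/-- `A₂(m,ℓ)` together with `α` disjoint copies of `K₂`. -/
def A2plus (m l α : ℕ) :
    Matrix ((Fin (2 * m) ⊕ Fin (2 * l)) ⊕ Fin 2 × Fin α)
      ((Fin (2 * m) ⊕ Fin (2 * l)) ⊕ Fin 2 × Fin α) ℤ :=
  Matrix.fromBlocks (A2mat m l) 0 0 (Matrix.blockDiagonal fun _ : Fin α => revId 2)

/-- The reverse identity over `ℤ[X]`. -/
noncomputable def Rp (k : ℕ) : Matrix (Fin k) (Fin k) ℤ[X] := Matrix.of fun i j => if i = Fin.rev j then 1 else 0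

lemma revId_map (k : ℕ) : (revId k).map C = Rp k := by
  ext1 i j
  have h : ((i : ℕ) + (j : ℕ) = k - 1) ↔ i = Fin.rev j := by
    rw [Fin.ext_iff, Fin.val_rev]; omega
  simp only [revId, Rp, Matrix.map_apply, Matrix.of_apply, h]
  split_ifs <;> simp

/-- Pairing of `Fin (2m)` into orbits of reversal. -/
def pairFun (m : ℕ) (p : Fin 2 × Fin m) : Fin (2 * m) :=
  if p.1 = 0 then ⟨p.2, by omega⟩ else Fin.rev ⟨p.2, by omega⟩

lemma pairFun_bij (m : ℕ) : Function.Bijective (pairFun m) := by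
  rw [Fintype.bijective_iff_injective_and_card]
  refine ⟨?_, by simp⟩
  rintro ⟨a, i⟩ ⟨b, j⟩ h
  have hi := i.2
  have hj := j.2
  fin_cases a <;> fin_cases b <;> simp [pairFun, Fin.ext_iff, Fin.val_rev] at h ⊢ <;> omega

lemma det_block (m : ℕ) (ε : ℤ[X]) (hε : ε * ε = 1) :
    (Matrix.blockDiagonal fun _ : Fin m => !![(X : ℤ[X]), ε; ε, X]).det = (X ^ 2 - 1) ^ m := by
  rw [Matrix.det_blockDiagonal]
  simp [Matrix.det_fin_two, hε, sq]

lemma det_R (m : ℕ) (ε : ℤ[X]) (hε : ε * ε = 1) :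
    ((X : ℤ[X]) • (1 : Matrix (Fin (2 * m)) (Fin (2 * m)) ℤ[X]) + ε • Rp (2 * m)).det
      = (X ^ 2 - 1) ^ m := by
  rw [← det_block m ε hε,
    ← Matrix.det_submatrix_equiv_self (Equiv.ofBijective _ (pairFun_bij m))]
  congr 1
  ext1 ⟨a, i⟩ ⟨b, j⟩
  have hi := i.2
  have hj := j.2
  have key : ∀ (a b : Fin 2), (pairFun m (a, i) = pairFun m (b, j) ↔ a = b ∧ i = j) :=
    fun a b => by rw [(pairFun_bij m).1.eq_iff, Prod.mk.injEq]
  have hrev : Fin.rev (pairFun m (b, j)) = pairFun m (1 - b, j) := by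
    fin_cases b <;> simp [pairFun]
  simp only [Matrix.submatrix_apply, Equiv.ofBijective_apply, Matrix.add_apply, Matrix.smul_apply,
    Matrix.one_apply, Rp, Matrix.of_apply, hrev, key, Matrix.blockDiagonal_apply]
  by_cases hij : i = j
  · fin_cases a <;> fin_cases b <;> simp [hij]
  · simp [hij]

lemma charpoly_K2 (α : ℕ) :
    (Matrix.blockDiagonal fun _ : Fin α => revId 2).charpoly = (X ^ 2 - 1) ^ α := by
  rw [← det_block α (-1) (by ring), Matrix.charpoly]
  congr 1
  ext1 ⟨a, i⟩ ⟨b, j⟩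
  simp only [Matrix.charmatrix_apply, Matrix.diagonal_apply, Matrix.blockDiagonal_apply, revId,
    Prod.mk.injEq]
  by_cases hij : i = j
  · fin_cases a <;> fin_cases b <;> simp [hij]
  · simp [hij]

/-- All-ones over `ℤ[X]`. -/
noncomputable def Jp (p q : Type*) : Matrix p q ℤ[X] := Matrix.of fun _ _ => 1

lemma Jp_mul_Rp (p : Type*) (k : ℕ) : Jp p (Fin k) * Rp k = Jp p (Fin k) := by
  ext1 i j
  simp [Matrix.mul_apply, Jp, Rp]

lemma Rp_mul_Rp (k : ℕ) : Rp k * Rp k = 1 := by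
  ext1 i j
  simp [Matrix.mul_apply, Rp, Matrix.one_apply]

lemma Jp_mul_Jp (p q : Type*) (r : Type*) [Fintype q] :
    Jp p q * Jp q r = (Fintype.card q : ℤ[X]) • Jp p r := by
  ext1 i j
  simp [Matrix.mul_apply, Jp]

lemma charmatrix_A2 (m l : ℕ) : (A2mat m l).charmatrix =
    Matrix.fromBlocks ((X : ℤ[X]) • 1 - Rp (2 * m)) (-Jp _ _) (-Jp _ _)
      ((X : ℤ[X]) • 1 + Rp (2 * l)) := by
  rw [A2mat, Matrix.charmatrix_fromBlocks, ← revId_map, ← revId_map]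
  rw [Matrix.fromBlocks_inj]
  refine ⟨?_, ?_, ?_, ?_⟩
  · ext1 i j
    simp [Matrix.charmatrix_apply, Matrix.diagonal_apply, Matrix.one_apply]
  · ext1 i j; simp [Jmat, Jp]
  · ext1 i j; simp [Jmat, Jp]
  · ext1 i j
    simp [Matrix.charmatrix_apply, Matrix.diagonal_apply, Matrix.one_apply]

lemma A2_charpoly (m l : ℕ) : (A2mat m l).charpoly * (X ^ 2 - 1) =
    (X ^ 2 - 1) ^ (m + l) * (X ^ 2 - 1 - C (4 * (m : ℤ) * l)) := by
  set c : ℤ[X] := X ^ 2 - 1 with hc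
  have hc0 : c ≠ 0 := (by monicity! : (X ^ 2 - 1 : ℤ[X]).Monic).ne_zero
  let E : Matrix (Fin (2 * m) ⊕ Fin (2 * l)) (Fin (2 * m) ⊕ Fin (2 * l)) ℤ[X] :=
    Matrix.fromBlocks ((X : ℤ[X]) • 1 + (1 : ℤ[X]) • Rp (2 * m)) 0 0
      ((X : ℤ[X]) • 1 + (-1 : ℤ[X]) • Rp (2 * l))
  have hE : E.det = c ^ (m + l) := by
    rw [Matrix.det_fromBlocks_zero₁₂, det_R _ _ (by ring), det_R _ _ (by ring), pow_add]
  let U : Matrix (Fin (2 * m) ⊕ Fin (2 * l)) (Unit ⊕ Unit) ℤ[X] :=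
    Matrix.fromBlocks (Jp _ _) 0 0 (Jp _ _)
  let W : Matrix (Unit ⊕ Unit) (Fin (2 * m) ⊕ Fin (2 * l)) ℤ[X] :=
    Matrix.fromBlocks 0 ((X - 1 : ℤ[X]) • Jp _ _) ((X + 1 : ℤ[X]) • Jp _ _) 0
  have hmul : (A2mat m l).charmatrix * E = Matrix.scalar _ c - U * W := by
    have hs : Matrix.scalar (Fin (2 * m) ⊕ Fin (2 * l)) c =
        Matrix.fromBlocks (c • 1) 0 0 (c • 1) := by
      rw [← smul_zero (A := Matrix (Fin (2 * m)) (Fin (2 * l)) ℤ[X]) c,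
        ← smul_zero (A := Matrix (Fin (2 * l)) (Fin (2 * m)) ℤ[X]) c, ← Matrix.fromBlocks_smul,
        Matrix.fromBlocks_one, Matrix.smul_one_eq_diagonal]
      rfl
    rw [charmatrix_A2, hs, sub_eq_add_neg (Matrix.fromBlocks (c • _) _ _ _)]
    simp only [E, U, W, Matrix.fromBlocks_multiply, Matrix.fromBlocks_neg, Matrix.fromBlocks_add]
    rw [Matrix.fromBlocks_inj]
    refine ⟨?_, ?_, ?_, ?_⟩
    · simp [sub_mul, mul_add, Rp_mul_Rp, hc, sub_smul, smul_sub, smul_smul, sq]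
    · simp [Matrix.mul_add, Matrix.mul_sub, Jp_mul_Rp, Jp_mul_Jp, sub_smul]; abel
    · simp [Matrix.mul_add, Jp_mul_Rp, Jp_mul_Jp, add_smul]; abel
    · simp [add_mul, mul_add, Rp_mul_Rp, hc, sub_smul, smul_smul, sq]; abel
  have hWU : (Matrix.scalar (Unit ⊕ Unit) c - W * U).det = c * (c - C (4 * (m : ℤ) * l)) := by
    simp only [U, W, Matrix.fromBlocks_multiply]
    rw [← Matrix.det_submatrix_equiv_self (finSumFinEquiv.symm.trans
      (Equiv.sumCongr (Equiv.ofUnique (Fin 1) Unit) (Equiv.ofUnique (Fin 1) Unit)))]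
    rw [Matrix.det_fin_two]
    have h0 : (finSumFinEquiv (m := 1) (n := 1)).symm (0 : Fin 2) = Sum.inl 0 := rfl
    have h1 : (finSumFinEquiv (m := 1) (n := 1)).symm (1 : Fin 2) = Sum.inr 0 := rfl
    simp [h0, h1, Jp_mul_Jp]
    simp [Jp, hc]
    ring
  have hcomm := congrArg (Polynomial.eval c) (Matrix.charpoly_mul_comm' U W)
  simp only [Polynomial.eval_mul, Matrix.eval_charpoly, hWU, ← hmul, Matrix.det_mul, hE,
    Polynomial.eval_pow, Polynomial.eval_X, Fintype.card_sum, Fintype.card_fin,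
    Fintype.card_unit] at hcomm
  change c ^ 2 * ((A2mat m l).charpoly * _) = _ at hcomm
  apply mul_left_cancel₀ (pow_ne_zero (m + l + 1) hc0)
  linear_combination hcomm

lemma A2plus_charpoly (m l α : ℕ) : (A2plus m l α).charpoly * (X ^ 2 - 1) =
    (X ^ 2 - 1) ^ (m + l + α) * (X ^ 2 - 1 - C (4 * (m : ℤ) * l)) := by
  rw [A2plus, Matrix.charpoly_fromBlocks_zero₁₂, charpoly_K2]
  linear_combination (X ^ 2 - 1) ^ α * A2_charpoly m l

/-- `A₂(m,ℓ) + α·K₂` and `A₂(m',ℓ') + α'·K₂` are cospectral iff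
`mℓ = m'ℓ'` and `m + ℓ + α = m' + ℓ' + α'`. -/
theorem stmt7 (m l m' l' α α' : ℕ) (hl : 2 ≤ l) (hml : l ≤ m) (hl' : 2 ≤ l') (hml' : l' ≤ m') :
    (A2plus m l α).charpoly = (A2plus m' l' α').charpoly ↔
      m * l = m' * l' ∧ m + l + α = m' + l' + α' := by
  have hc0 : (X ^ 2 - 1 : ℤ[X]) ≠ 0 := (by monicity! : (X ^ 2 - 1 : ℤ[X]).Monic).ne_zero
  constructor
  · intro h
    have hd := congrArg Polynomial.natDegree h
    simp only [Matrix.charpoly_natDegree_eq_dim, Fintype.card_sum, Fintype.card_prod,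
      Fintype.card_fin] at hd
    have hk : m + l + α = m' + l' + α' := by omega
    have h1 := A2plus_charpoly m l α
    rw [h, A2plus_charpoly, hk] at h1
    have h2 := Polynomial.C_injective (sub_right_injective (mul_left_cancel₀ (pow_ne_zero _ hc0) h1))
    refine ⟨?_, hk⟩
    zify
    linarith
  · rintro ⟨hm, hk⟩
    apply mul_right_cancel₀ hc0
    have hz : (4 * (m : ℤ) * l) = 4 * (m' : ℤ) * l' := by
      have : (m : ℤ) * l = m' * l' := by exact_mod_cast hm
      linarith
    rw [A2plus_charpoly, A2plus_charpoly, hk, hz]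
end
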